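/- Let G be a connected simple graph on Fin N with N ≥ 2 and let θ : Fin N → ℝ be a completely degenerate equilibrium of the identical Kuramoto system on G. Then θ is a saddle point of the energy E: θ is neither a local minimum nor a local maximum of E : (Fin N → ℝ) → ℝ, E(φ) = (1/2)·∑_{j,k} a(j,k)·(1 − cos(φ j − φ k)). -/

import Mathlib

open Real

open Classical in
/-- Adjacency indicator: `1` if `j` and `k` are adjacent in `G`, `0` otherwise. -/
noncomputable def adjInd {V : Type*} (G : SimpleGraph V) (j k : V) : ℝ :=
  if G.Adj j k then 1 else 0

/-- A completely degenerate equilibrium of the identical Kuramoto system on `G`. -/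
def IsCDE {V : Type*} [Fintype V] (G : SimpleGraph V) (θ : V → ℝ) : Prop :=
  (∀ k, ∑ j, adjInd G j k * Real.sin (θ j - θ k) = 0) ∧
  (∀ j k, G.Adj j k → Real.cos (θ j - θ k) = 0)

/-- The energy of the identical Kuramoto system (sum over ordered pairs, halved). -/
noncomputable def energy {N : ℕ} (G : SimpleGraph (Fin N)) (φ : Fin N → ℝ) : ℝ :=
  (1 / 2) * ∑ p, ∑ q, adjInd G p q * (1 - Real.cos (φ p - φ q))


lemma key_path {N : ℕ} (G : SimpleGraph (Fin N)) (θ : Fin N → ℝ) (hθ : IsCDE G θ)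
    (j k : Fin N) (hjk : G.Adj j k) (t : ℝ) :
    energy G (fun i => θ i + t * ((if i = j then 1 else 0) - (if i = k then 1 else 0)))
      = energy G θ + Real.sin (θ j - θ k) * (Real.sin (2 * t) - 2 * Real.sin t) := by
  obtain ⟨h1, h2⟩ := hθ
  have hne : j ≠ k := hjk.ne
  set w : Fin N → ℝ := fun i => (if i = j then 1 else 0) - (if i = k then 1 else 0) with hw
  set S : Fin N → Fin N → ℝ := fun p q => adjInd G p q * Real.sin (θ p - θ q) with hS
  have hanti : ∀ p q, S p q = - S q p := by
    intro p q
    have : Real.sin (θ p - θ q) = - Real.sin (θ q - θ p) := by rw [← Real.sin_neg]; ring_nf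
    have h3 : adjInd G p q = adjInd G q p := by
      by_cases h : G.Adj p q
      · simp [adjInd, h, h.symm]
      · have h' : ¬ G.Adj q p := fun h'' => h h''.symm
        simp [adjInd, h, h']
    simp only [hS, this, h3]; ring
  have hb : ∀ q, ∑ p, S p q = 0 := h1
  have hb' : ∀ p, ∑ q, S p q = 0 := by
    intro p
    rw [Finset.sum_congr rfl (fun q _ => hanti p q), Finset.sum_neg_distrib, hb, neg_zero]
  have hterm : ∀ p q, adjInd G p q * (1 - Real.cos ((θ p + t * w p) - (θ q + t * w q)))
      = adjInd G p q * (1 - Real.cos (θ p - θ q)) + (S p q * (w p * Real.sin t)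
        - S p q * (w q * Real.sin t)
        + S p q * (((if p = j then 1 else 0) * (if q = k then 1 else 0)
          - (if p = k then 1 else 0) * (if q = j then 1 else 0))
          * (Real.sin (2 * t) - 2 * Real.sin t))) := by
    intro p q
    have e : (θ p + t * w p) - (θ q + t * w q) = (θ p - θ q) + t * (w p - w q) := by ring
    have hs : Real.sin (t * (w p - w q)) = w p * Real.sin t - w q * Real.sin t +
        ((if p = j then 1 else 0) * (if q = k then 1 else 0)
          - (if p = k then 1 else 0) * (if q = j then 1 else 0))
          * (Real.sin (2 * t) - 2 * Real.sin t) := by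
      have e1 : t * (1 + 1) = 2 * t := by ring
      have e2 : t * (-1 - 1) = -(2 * t) := by ring
      by_cases a1 : p = j <;> by_cases a2 : p = k <;> by_cases a3 : q = j <;>
        by_cases a4 : q = k <;>
        first
        | exact absurd (a1.symm.trans a2) hne
        | exact absurd (a3.symm.trans a4) hne
        | (simp only [hw, a1, a2, a3, a4, hne, hne.symm, if_true, if_false]
           simp [e1, e2]; done)
        | (simp only [hw, a1, a2, a3, a4, hne, hne.symm, if_true, if_false]
           simp [e1, e2]; ring)
    rw [e, Real.cos_add, hs]
    by_cases hadj : G.Adj p q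
    · rw [h2 p q hadj]; simp only [hS]; ring
    · simp [hS, adjInd, hadj]
  have z1 : ∑ p, ∑ q, S p q * (w p * Real.sin t) = 0 := by
    simp only [← Finset.sum_mul, hb', zero_mul, Finset.sum_const_zero]
  have z2 : ∑ p, ∑ q, S p q * (w q * Real.sin t) = 0 := by
    rw [Finset.sum_comm]
    simp only [← Finset.sum_mul, hb, zero_mul, Finset.sum_const_zero]
  have z3 : ∑ p, ∑ q, S p q * (((if p = j then 1 else 0) * (if q = k then 1 else 0)
          - (if p = k then 1 else 0) * (if q = j then 1 else 0))
          * (Real.sin (2 * t) - 2 * Real.sin t))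
      = (S j k - S k j) * (Real.sin (2 * t) - 2 * Real.sin t) := by
    simp only [← mul_assoc, ← Finset.sum_mul, mul_sub, Finset.sum_sub_distrib]
    simp
  have hSjk : S j k = Real.sin (θ j - θ k) := by simp [hS, adjInd, hjk]
  unfold energy
  change 1 / 2 * ∑ p, ∑ q, adjInd G p q * (1 - Real.cos ((θ p + t * w p) - (θ q + t * w q))) = _
  simp only [hterm, Finset.sum_add_distrib, Finset.sum_sub_distrib, z1, z2, z3]
  rw [hanti k j, hSjk]; ring

theorem stmt13 {N : ℕ} (hN : 2 ≤ N) (G : SimpleGraph (Fin N)) (hG : G.Connected)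
    (θ : Fin N → ℝ) (hθ : IsCDE G θ) :
    ¬ IsLocalMin (energy G) θ ∧ ¬ IsLocalMax (energy G) θ := by
  have : Nontrivial (Fin N) := Fin.nontrivial_iff_two_le.mpr hN
  obtain ⟨k, hjk⟩ := hG.preconnected.exists_adj_of_nontrivial ⟨0, by omega⟩
  generalize (⟨0, by omega⟩ : Fin N) = j at hjk
  have hc : Real.sin (θ j - θ k) ≠ 0 := by
    intro h
    have := Real.sin_sq_add_cos_sq (θ j - θ k)
    rw [h, hθ.2 j k hjk] at this
    norm_num at this
  have hkey := key_path G θ hθ j k hjk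
  set c := Real.sin (θ j - θ k)
  set γ : ℝ → Fin N → ℝ := fun t i =>
    θ i + t * ((if i = j then 1 else 0) - (if i = k then 1 else 0)) with hγ
  have hcont : Filter.Tendsto γ (nhds 0) (nhds θ) := by
    have h : Continuous γ := by
      rw [hγ]; fun_prop
    have h0 : γ 0 = θ := by funext i; simp [hγ]
    simpa [h0] using h.tendsto 0
  have hneg : Filter.Tendsto (fun t : ℝ => -t) (nhds 0) (nhds 0) := by
    simpa using (continuous_neg (G := ℝ)).tendsto 0
  have main : ∀ P : (Fin N → ℝ) → Prop, (∀ᶠ x in nhds θ, P x) →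
      ∃ t : ℝ, Real.sin (2 * t) - 2 * Real.sin t < 0 ∧ P (γ t) ∧ P (γ (-t)) := by
    intro P hP
    have h1 := hcont.eventually hP
    have h2 := hneg.eventually h1
    obtain ⟨ε, hε, hb⟩ := Metric.eventually_nhds_iff.mp (h1.and h2)
    have hm : 0 < min (ε / 2) 1 := by positivity
    refine ⟨min (ε / 2) 1, ?_, hb ?_⟩
    · have hl : min (ε / 2) 1 ≤ 1 := min_le_right _ _
      generalize min (ε / 2) 1 = t at hm hl
      have hs : 0 < Real.sin t := Real.sin_pos_of_pos_of_le_one hm hl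
      have hcos : Real.cos t < 1 := by
        nlinarith [Real.sin_sq_add_cos_sq t, Real.cos_le_one t]
      rw [Real.sin_two_mul]; nlinarith
    · rw [Real.dist_eq, sub_zero, abs_of_pos hm]
      linarith [min_le_left (ε / 2) 1]
  have hm : ∀ t, energy G (γ (-t)) = energy G θ - c * (Real.sin (2 * t) - 2 * Real.sin t) := by
    intro t
    rw [hkey (-t), mul_neg, Real.sin_neg, Real.sin_neg]; ring
  constructor
  · intro h
    obtain ⟨t, ht, a, b⟩ := main _ h
    rw [hkey t] at a
    rw [hm t] at b
    have : c * (Real.sin (2 * t) - 2 * Real.sin t) = 0 := by linarith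
    exact (mul_ne_zero hc ht.ne) this
  · intro h
    obtain ⟨t, ht, a, b⟩ := main _ h
    rw [hkey t] at a
    rw [hm t] at b
    have : c * (Real.sin (2 * t) - 2 * Real.sin t) = 0 := by linarith
    exact (mul_ne_zero hc ht.ne) this
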